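/- arXiv:2509.07037 — 2 statements merged into one kernel-verified Lean document; each statement's English description precedes it below -/
import Mathlib

section
/- For every positive integer n, the number of representations of n as a sum of four integer squares (counting order and signs) equals 8 times the sum of the divisors d of n with 4 ∤ d; that is, r_4(n) = 8 · Σ_{d | n, 4 ∤ d} d. -/
/-!
Let `r₂ n` be the number of Gaussian integers of norm `n`, and `δ n = ∑_{d ∣ n} χ₄ d`.
The way a prime `p` splits in `ℤ[i]` gives `r₂ (p m) + χ₄ p · r₂ (m / p) = (1 + χ₄ p) · r₂ m`.
Complete multiplicativity of `χ₄` gives the same recursion for `δ`, so `r₂ = r₂ 1 · δ = 4 δ` away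
from `0`, that is `θ² = 1 + 4 ∑ δ n qⁿ`. Squaring reduces the theorem to the convolution `δ * δ`,
which is the sum of `χ₄ a · χ₄ b` over the positive solutions of `a x + b y = n`.
Since `χ₄ a · χ₄ b = I (a - b) - I (a + b)` with `I` the (even) indicator function of `4ℤ`,
Liouville's elementary identity collapses that sum to one over the divisors of `n`.
-/

namespace FourSquares

open Finset Zsqrtd

section Hecke

variable {R : Type*}

/-- The recursion along primes satisfied by the coefficients of a weight-one Hecke eigenform with
character `f` and `p`-th eigenvalue `1 + f p`. The term `g (m / p)` is read as `0` when `p ∤ m`. -/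
def HeckeRelation [CommSemiring R] (f g : ℕ → R) : Prop :=
  ∀ ⦃p m : ℕ⦄, p.Prime → m ≠ 0 →
    g (p * m) + f p * (if p ∣ m then g (m / p) else 0) = (1 + f p) * g m

theorem HeckeRelation.mul_apply_one [CommRing R] {f g h : ℕ → R} (hg : HeckeRelation f g)
    (hh : HeckeRelation f h) {n : ℕ} (hn : n ≠ 0) : g n * h 1 = g 1 * h n := by
  induction n using Nat.strong_induction_on with
  | _ n ih =>
    obtain rfl | hn1 := eq_or_ne n 1
    · rfl
    obtain ⟨p, hp, m, rfl⟩ := Nat.exists_prime_and_dvd hn1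
    have hm : m ≠ 0 := right_ne_zero_of_mul hn
    have hlt : m < p * m := lt_mul_of_one_lt_left (Nat.pos_of_ne_zero hm) hp.one_lt
    have ih_m := ih m hlt hm
    have ih_div : (if p ∣ m then g (m / p) else 0) * h 1 =
        g 1 * (if p ∣ m then h (m / p) else 0) := by
      split_ifs with hpm
      · exact ih _ ((Nat.div_le_self m p).trans_lt hlt)
          (Nat.div_pos (Nat.le_of_dvd (Nat.pos_of_ne_zero hm) hpm) hp.pos).ne'
      · simp
    linear_combination h 1 * hg hp hm - g 1 * hh hp hm + (1 + f p) * ih_m - f p * ih_div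

theorem divisors_prime_mul {p : ℕ} (hp : p.Prime) (m : ℕ) :
    (p * m).divisors = m.divisors ∪ m.divisors.image (p * ·) := by
  rw [Nat.divisors_mul, hp.divisors, insert_eq, union_mul, singleton_mul, singleton_mul]
  simp [smul_finset_def]

theorem divisors_inter_image_mul {p m : ℕ} (hp : p ≠ 0) (hm : m ≠ 0) :
    m.divisors ∩ m.divisors.image (p * ·) =
      if p ∣ m then (m / p).divisors.image (p * ·) else ∅ := by
  split_ifs with hpm
  · obtain ⟨k, rfl⟩ := hpm
    rw [Nat.mul_div_cancel_left k (Nat.pos_of_ne_zero hp)]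
    ext d
    simp only [mem_inter, mem_image, Nat.mem_divisors]
    constructor
    · rintro ⟨⟨hd, -⟩, e, -, rfl⟩
      exact ⟨e, ⟨Nat.dvd_of_mul_dvd_mul_left (Nat.pos_of_ne_zero hp) hd,
        right_ne_zero_of_mul hm⟩, rfl⟩
    · rintro ⟨e, ⟨he, -⟩, rfl⟩
      exact ⟨⟨mul_dvd_mul_left p he, hm⟩, e, ⟨he.mul_left p, hm⟩, rfl⟩
  · refine disjoint_iff_inter_eq_empty.1 (disjoint_left.2 fun d hd hd' => hpm ?_)
    obtain ⟨e, -, rfl⟩ := mem_image.1 hd'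
    exact (dvd_mul_right p e).trans (Nat.dvd_of_mem_divisors hd)

theorem heckeRelation_sum_divisors [CommSemiring R] {f : ℕ → R}
    (hf : ∀ a b, f (a * b) = f a * f b) :
    HeckeRelation f fun n => ∑ d ∈ n.divisors, f d := by
  intro p m hp hm
  have sum_image_mul (n : ℕ) :
      ∑ d ∈ n.divisors.image (p * ·), f d = f p * ∑ d ∈ n.divisors, f d := by
    rw [sum_image (mul_right_injective₀ hp.ne_zero).injOn, mul_sum]
    exact sum_congr rfl fun d _ => hf p d
  have inter : ∑ d ∈ m.divisors ∩ m.divisors.image (p * ·), f d =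
      f p * if p ∣ m then ∑ d ∈ (m / p).divisors, f d else 0 := by
    rw [divisors_inter_image_mul hp.ne_zero hm]
    split_ifs
    · exact sum_image_mul _
    · simp
  simp only [← inter]
  rw [divisors_prime_mul hp, sum_union_inter, sum_image_mul]
  ring

end Hecke

section Liouville

theorem sum_trichotomy {ι α M : Type*} [LinearOrder α] [AddCommMonoid M] (s : Finset ι)
    (u v : ι → α) (G : ι → M) :
    ∑ q ∈ s, G q = ∑ q ∈ s with u q < v q, G q + ∑ q ∈ s with u q = v q, G q +
      ∑ q ∈ s with v q < u q, G q := by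
  simp only [sum_filter, ← sum_add_distrib]
  refine sum_congr rfl fun q _ => ?_
  obtain h | h | h := lt_trichotomy (u q) (v q)
  · simp [h, h.ne, h.not_gt]
  · simp [h]
  · simp [h, h.ne', h.not_gt]

/-- The solutions of `a * x + b * y = n` in positive integers, encoded as `((a, x), (b, y))`. -/
def posSolutions (n : ℕ) : Finset ((ℕ × ℕ) × ℕ × ℕ) :=
  (antidiagonal n).biUnion fun k => k.1.divisorsAntidiagonal ×ˢ k.2.divisorsAntidiagonal

theorem mem_posSolutions {n a x b y : ℕ} : ((a, x), b, y) ∈ posSolutions n ↔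
    a * x + b * y = n ∧ (0 < a ∧ 0 < x) ∧ 0 < b ∧ 0 < y := by
  simp [posSolutions, Nat.pos_iff_ne_zero]

theorem sum_antidiagonal_sum_divisors_mul {R : Type*} [NonUnitalNonAssocSemiring R] (n : ℕ)
    (f g : ℕ → R) :
    ∑ k ∈ antidiagonal n, (∑ d ∈ k.1.divisors, f d) * ∑ d ∈ k.2.divisors, g d =
      ∑ q ∈ posSolutions n, f q.1.1 * g q.2.1 := by
  rw [posSolutions, sum_biUnion]
  · refine sum_congr rfl fun k _ => ?_
    rw [← Nat.sum_divisorsAntidiagonal fun d _ => f d,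
      ← Nat.sum_divisorsAntidiagonal fun d _ => g d, sum_mul_sum, ← sum_product']
  · intro k _ l _ hkl
    refine disjoint_left.2 fun q hk hl => hkl ?_
    simp only [mem_product, Nat.mem_divisorsAntidiagonal] at hk hl
    exact Prod.ext (hk.1.1.symm.trans hl.1.1) (hk.2.1.symm.trans hl.2.1)

variable {M : Type*} [AddCommMonoid M] (n : ℕ)

theorem sum_posSolutions_swap (P : (ℕ × ℕ) × ℕ × ℕ → Prop) [DecidablePred P]
    (G : (ℕ × ℕ) × ℕ × ℕ → M) :
    ∑ q ∈ posSolutions n with P q, G q = ∑ q ∈ posSolutions n with P q.swap, G q.swap := by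
  refine sum_equiv (Equiv.prodComm _ _) ?_ fun _ _ => rfl
  rintro ⟨⟨a, x⟩, b, y⟩
  simp only [mem_filter, Equiv.prodComm_apply, Prod.swap_prod_mk, mem_posSolutions]
  grind

theorem sum_posSolutions_transpose (P : (ℕ × ℕ) × ℕ × ℕ → Prop) [DecidablePred P]
    (G : (ℕ × ℕ) × ℕ × ℕ → M) :
    ∑ q ∈ posSolutions n with P q, G q =
      ∑ q ∈ posSolutions n with P (q.map Prod.swap Prod.swap), G (q.map Prod.swap Prod.swap) := by
  refine sum_equiv ((Equiv.prodComm _ _).prodCongr (Equiv.prodComm _ _)) ?_ fun _ _ => rfl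
  rintro ⟨⟨a, x⟩, b, y⟩
  simp only [mem_filter, Equiv.prodCongr_apply, Equiv.coe_prodComm, Prod.map_apply,
    Prod.swap_prod_mk, mem_posSolutions]
  grind

-- The maps `(a, b) ↦ (a - b, b)` and `(x, y) ↦ (x, x + y)` are inverse transposes of each other,
-- so together they preserve `a * x + b * y`.
theorem sum_posSolutions_shear (G : (ℕ × ℕ) × ℕ × ℕ → M) :
    ∑ q ∈ posSolutions n with q.2.1 < q.1.1, G q =
      ∑ q ∈ posSolutions n with q.1.2 < q.2.2,
        G ((q.1.1 + q.2.1, q.1.2), q.2.1, q.2.2 - q.1.2) := by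
  refine sum_nbij' (fun q => ((q.1.1 - q.2.1, q.1.2), q.2.1, q.1.2 + q.2.2))
    (fun q => ((q.1.1 + q.2.1, q.1.2), q.2.1, q.2.2 - q.1.2)) ?_ ?_ ?_ ?_ ?_
  · rintro ⟨⟨a, x⟩, b, y⟩ hq
    simp only [mem_filter, mem_posSolutions] at hq ⊢
    obtain ⟨⟨rfl, hpos⟩, hba⟩ := hq
    obtain ⟨c, rfl⟩ := Nat.exists_eq_add_of_lt hba
    refine ⟨⟨?_, by omega⟩, by omega⟩
    rw [show b + c + 1 - b = c + 1 by omega]; ring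
  · rintro ⟨⟨a, x⟩, b, y⟩ hq
    simp only [mem_filter, mem_posSolutions] at hq ⊢
    obtain ⟨⟨rfl, hpos⟩, hxy⟩ := hq
    obtain ⟨z, rfl⟩ := Nat.exists_eq_add_of_lt hxy
    refine ⟨⟨?_, by omega⟩, by omega⟩
    rw [show x + z + 1 - x = z + 1 by omega]; ring
  all_goals
    rintro ⟨⟨a, x⟩, b, y⟩ hq
    have := (mem_filter.1 hq).2
    grind

theorem sum_posSolutions_filter_snd_eq (G : ℕ → ℕ → ℕ → M) :
    ∑ q ∈ posSolutions n with q.1.2 = q.2.2, G (q.1.1 + q.2.1) q.1.2 q.1.1 =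
      ∑ p ∈ n.divisorsAntidiagonal, ∑ l ∈ Ico 1 p.1, G p.1 p.2 l := by
  rw [sum_sigma']
  refine sum_nbij' (fun q => (⟨(q.1.1 + q.2.1, q.1.2), q.1.1⟩ : (_ : ℕ × ℕ) × ℕ))
    (fun s => ((s.2, s.1.2), s.1.1 - s.2, s.1.2)) ?_ ?_ ?_ ?_ fun _ _ => rfl
  · rintro ⟨⟨a, x⟩, b, y⟩ hq
    simp only [mem_filter, mem_posSolutions] at hq
    obtain ⟨⟨rfl, ⟨ha, hx⟩, hb, -⟩, rfl⟩ := hq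
    simp only [mem_sigma, Nat.mem_divisorsAntidiagonal, mem_Ico]
    exact ⟨⟨add_mul a b x, by positivity⟩, ha, by omega⟩
  · rintro ⟨⟨d, e⟩, l⟩ hs
    simp only [mem_sigma, Nat.mem_divisorsAntidiagonal, mem_Ico] at hs
    obtain ⟨⟨rfl, hde⟩, hl, hld⟩ := hs
    simp only [mem_filter, mem_posSolutions, and_true]
    have he : 0 < e := Nat.pos_of_ne_zero (right_ne_zero_of_mul hde)
    exact ⟨by rw [← add_mul, Nat.add_sub_cancel' hld.le], ⟨hl, he⟩, by omega, he⟩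
  · rintro ⟨⟨a, x⟩, b, y⟩ hq
    have := (mem_filter.1 hq).2
    grind
  · rintro ⟨⟨d, e⟩, l⟩ hs
    simp only [mem_sigma, mem_Ico] at hs
    grind

end Liouville

section LiouvilleIdentity

variable {M : Type*} [AddCommGroup M] (n : ℕ)

theorem sum_lt_add_sum_eq_comm (F : ℕ → M) :
    ∑ q ∈ posSolutions n with q.1.2 < q.2.2, F q.1.1 +
        ∑ q ∈ posSolutions n with q.1.2 = q.2.2, F q.1.1 =
      ∑ q ∈ posSolutions n with q.2.1 < q.1.1, F q.1.1 +
        ∑ q ∈ posSolutions n with q.2.1 = q.1.1, F q.1.1 := by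
  have shear : ∑ q ∈ posSolutions n with q.1.1 < q.2.1, F q.1.1 =
      ∑ q ∈ posSolutions n with q.2.2 < q.1.2, F q.1.1 := by
    rw [sum_posSolutions_swap]
    exact (sum_posSolutions_shear n fun q => F q.2.1).trans (sum_posSolutions_swap n _ _)
  have total := (sum_trichotomy (posSolutions n) (·.1.2) (·.2.2) (F ·.1.1)).symm.trans
    (sum_trichotomy (posSolutions n) (·.2.1) (·.1.1) (F ·.1.1))
  rw [shear] at total
  exact add_right_cancel total

theorem sum_posSolutions_add (F : ℕ → M) :
    ∑ q ∈ posSolutions n, F (q.1.1 + q.2.1) =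
      2 • ∑ q ∈ posSolutions n with q.2.1 < q.1.1, F q.1.1 +
        ∑ q ∈ posSolutions n with q.1.2 = q.2.2, F (q.1.1 + q.2.1) := by
  have swap : ∑ q ∈ posSolutions n with q.2.2 < q.1.2, F (q.1.1 + q.2.1) =
      ∑ q ∈ posSolutions n with q.1.2 < q.2.2, F (q.1.1 + q.2.1) := by
    rw [sum_posSolutions_swap]
    simp only [Prod.fst_swap, Prod.snd_swap, add_comm]
  rw [sum_trichotomy _ (·.1.2) (·.2.2), swap, sum_posSolutions_shear n fun q => F q.1.1]
  abel

theorem sum_posSolutions_sub {F : ℤ → M} (hF : ∀ x, F (-x) = F x) :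
    ∑ q ∈ posSolutions n, F (q.1.1 - q.2.1) =
      2 • ∑ q ∈ posSolutions n with q.1.2 < q.2.2, F q.1.1 +
        ∑ q ∈ posSolutions n with q.2.1 = q.1.1, F 0 := by
  have swap : ∑ q ∈ posSolutions n with q.1.1 < q.2.1, F (q.1.1 - q.2.1) =
      ∑ q ∈ posSolutions n with q.2.1 < q.1.1, F (q.1.1 - q.2.1) := by
    rw [sum_posSolutions_swap]
    exact sum_congr rfl fun q _ => by simp [← hF (q.1.1 - q.2.1)]
  have diag : ∑ q ∈ posSolutions n with q.2.1 = q.1.1, F (q.1.1 - q.2.1) =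
      ∑ q ∈ posSolutions n with q.2.1 = q.1.1, F 0 :=
    sum_congr rfl fun q hq => by rw [(mem_filter.1 hq).2, sub_self]
  rw [sum_trichotomy _ (·.2.1) (·.1.1), swap, diag,
    sum_posSolutions_shear n fun q => F (q.1.1 - q.2.1)]
  simp only [Nat.cast_add, add_sub_cancel_right]
  abel

theorem liouville_identity {F : ℤ → M} (hF : ∀ x, F (-x) = F x) :
    ∑ q ∈ posSolutions n, (F (q.1.1 - q.2.1) - F (q.1.1 + q.2.1)) =
      ∑ p ∈ n.divisorsAntidiagonal,
        ((p.1 - 1) • (F 0 + 2 • F p.2 - F p.1) - 2 • ∑ l ∈ Ico 1 p.1, F l) := by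
  have on_left_eq (G : ℕ → M) : ∑ q ∈ posSolutions n with q.2.1 = q.1.1, G q.1.1 =
      ∑ p ∈ n.divisorsAntidiagonal, (p.1 - 1) • G p.2 := by
    rw [sum_posSolutions_transpose]
    simpa [eq_comm] using sum_posSolutions_filter_snd_eq n fun _ x _ => G x
  have on_right_eq := sum_posSolutions_filter_snd_eq n fun _ _ a => F a
  have on_right_eq_add : ∑ q ∈ posSolutions n with q.1.2 = q.2.2, F (q.1.1 + q.2.1) =
      ∑ p ∈ n.divisorsAntidiagonal, (p.1 - 1) • F p.1 := by
    simpa using sum_posSolutions_filter_snd_eq n fun d _ _ => F d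
  have plus := sum_posSolutions_add n fun a => F a
  have balance := sum_lt_add_sum_eq_comm n fun a => F a
  simp only [Nat.cast_add] at plus
  rw [on_left_eq fun a => F a, on_right_eq] at balance
  rw [sum_sub_distrib, sum_posSolutions_sub n hF, plus, on_left_eq fun _ => F 0, on_right_eq_add]
  simp only [smul_sub, smul_add, sum_sub_distrib, sum_add_distrib, smul_comm _ 2, ← smul_sum]
  rw [eq_sub_of_add_eq balance]
  module

end LiouvilleIdentity

section GaussianInt

/-- The Gaussian integers of norm `n`; their number is `r₂ n`. -/
def gaussianNormEq (n : ℕ) : Set GaussianInt := {z | z.norm = n}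

theorem mem_gaussianNormEq {n : ℕ} {z : GaussianInt} : z ∈ gaussianNormEq n ↔ z.norm = n :=
  Iff.rfl

theorem norm_eq_sq_add_sq (z : GaussianInt) : z.norm = z.re ^ 2 + z.im ^ 2 := by
  rw [norm_def]
  ring

theorem finite_gaussianNormEq (n : ℕ) : (gaussianNormEq n).Finite := by
  refine Set.Finite.of_injOn (f := fun z => (z.re, z.im))
    (t := Set.Icc (-n : ℤ) n ×ˢ Set.Icc (-n : ℤ) n) (fun z hz => ?_)
    (fun z _ w _ h => Zsqrtd.ext (congrArg Prod.fst h) (congrArg Prod.snd h))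
    ((Set.finite_Icc _ _).prod (Set.finite_Icc _ _))
  rw [mem_gaussianNormEq, norm_eq_sq_add_sq] at hz
  have abs_le {x : ℤ} (hx : x ^ 2 ≤ n) : x ∈ Set.Icc (-n : ℤ) n :=
    abs_le.1 ((Int.le_self_sq |x|).trans ((sq_abs x).trans_le hx))
  exact ⟨abs_le (by linarith [sq_nonneg z.im]), abs_le (by linarith [sq_nonneg z.re])⟩

theorem ncard_gaussianNormEq_zero : (gaussianNormEq 0).ncard = 1 := by
  rw [Set.ncard_eq_one]
  exact ⟨0, by ext z; simp [mem_gaussianNormEq, GaussianInt.norm_eq_zero]⟩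

theorem ncard_gaussianNormEq_one : (gaussianNormEq 1).ncard = 4 := by
  have units : gaussianNormEq 1 =
      (({1, -1, ⟨0, 1⟩, ⟨0, -1⟩} : Finset GaussianInt) : Set GaussianInt) := by
    ext ⟨x, y⟩
    simp only [mem_gaussianNormEq, norm_eq_sq_add_sq, coe_insert, coe_singleton, Set.mem_insert_iff,
      Set.mem_singleton_iff, Zsqrtd.ext_iff, re_one, im_one, re_neg, im_neg]
    constructor
    · intro h
      push_cast at h
      obtain ⟨hx, hx'⟩ : -1 ≤ x ∧ x ≤ 1 := by constructor <;> nlinarith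
      obtain ⟨hy, hy'⟩ : -1 ≤ y ∧ y ≤ 1 := by constructor <;> nlinarith
      interval_cases x <;> interval_cases y <;> simp_all
    · rintro (⟨rfl, rfl⟩ | ⟨rfl, rfl⟩ | ⟨rfl, rfl⟩ | ⟨rfl, rfl⟩) <;> norm_num
  rw [units, Set.ncard_coe_finset]
  decide

theorem ncard_gaussianNormEq_sep_dvd {π : GaussianInt} (hπ : π ≠ 0) {k : ℕ} (hk : π.norm = k)
    (m : ℕ) : {z ∈ gaussianNormEq (k * m) | π ∣ z}.ncard = (gaussianNormEq m).ncard := by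
  rw [← Set.ncard_image_of_injective (gaussianNormEq m) (mul_right_injective₀ hπ)]
  congr 1
  ext z
  have hk0 : (k : ℤ) ≠ 0 := by rwa [← hk, Ne, GaussianInt.norm_eq_zero]
  constructor
  · rintro ⟨hz, w, rfl⟩
    rw [mem_gaussianNormEq, norm_mul, hk, Nat.cast_mul] at hz
    exact ⟨w, mul_left_cancel₀ hk0 hz, rfl⟩
  · rintro ⟨w, hw, rfl⟩
    refine ⟨?_, dvd_mul_right π w⟩
    rw [mem_gaussianNormEq, norm_mul, hk, mem_gaussianNormEq.1 hw, Nat.cast_mul]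

theorem ncard_gaussianNormEq_sep_natCast_dvd {p : ℕ} (hp : p ≠ 0) (m : ℕ) :
    {z ∈ gaussianNormEq (p * m) | (p : GaussianInt) ∣ z}.ncard =
      if p ∣ m then (gaussianNormEq (m / p)).ncard else 0 := by
  split_ifs with hpm
  · obtain ⟨k, rfl⟩ := hpm
    rw [Nat.mul_div_cancel_left k (Nat.pos_of_ne_zero hp), ← mul_assoc]
    exact ncard_gaussianNormEq_sep_dvd (Nat.cast_ne_zero.2 hp) (by simp) k
  · rw [Set.ncard_eq_zero ((finite_gaussianNormEq _).sep _), Set.sep_eq_empty_iff_mem_false]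
    rintro z hz ⟨w, rfl⟩
    refine hpm (Int.natCast_dvd_natCast.1 ⟨w.norm, ?_⟩)
    refine mul_left_cancel₀ (Nat.cast_ne_zero (R := ℤ).2 hp) ?_
    rw [← mul_assoc, ← norm_natCast (d := -1), ← norm_mul, mem_gaussianNormEq.1 hz, Nat.cast_mul]

theorem prime_of_norm_eq_prime {π : GaussianInt} {p : ℕ} (hp : p.Prime) (hπ : π.norm = p) :
    Prime π := by
  have : IsLocalHom (normMonoidHom (d := -1)) := ⟨fun z => (isUnit_iff_norm_isUnit z).2⟩
  have norm_irreducible : Irreducible (normMonoidHom π) := by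
    change Irreducible π.norm
    rw [hπ]
    exact (Nat.prime_iff_prime_int.1 hp).irreducible
  exact norm_irreducible.of_map.prime

theorem dvd_or_star_dvd_of_dvd_norm {π z : GaussianInt} (hπ : Prime π)
    (h : π ∣ (z.norm : GaussianInt)) : π ∣ z ∨ star π ∣ z := by
  rw [norm_eq_mul_conj] at h
  refine (hπ.dvd_or_dvd h).imp_right fun hz => ?_
  simpa [starRingEnd_apply] using map_dvd (starRingEnd GaussianInt) hz

theorem star_not_dvd_of_norm_eq_prime {π : GaussianInt} {p : ℕ} (hp : p.Prime) (hp2 : p ≠ 2)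
    (hπ : π.norm = p) : ¬ star π ∣ π := by
  have hpp : Prime (p : ℤ) := Nat.prime_iff_prime_int.1 hp
  rintro ⟨w, hw⟩
  have hre : (p : ℤ) ∣ π.re := by
    have trace : star π * (w + 1) = (2 * π.re : ℤ) := by
      rw [mul_add, ← hw, mul_one]
      ext
      · simp [two_mul]
      · simp
    have norm_dvd : (p : ℤ) ∣ (2 * π.re) * (2 * π.re) := by
      rw [← norm_intCast (d := -1), ← trace, norm_mul, norm_conj, hπ]
      exact dvd_mul_right _ _
    have hp2' : ¬ (p : ℤ) ∣ 2 := by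
      exact_mod_cast fun h => hp2 ((Nat.prime_dvd_prime_iff_eq hp Nat.prime_two).1 h)
    exact (hpp.dvd_or_dvd (or_self_iff.1 (hpp.dvd_or_dvd norm_dvd))).resolve_left hp2'
  rw [norm_eq_sq_add_sq] at hπ
  have him : (p : ℤ) ∣ π.im := by
    refine hpp.dvd_of_dvd_pow (n := 2) ((Int.dvd_add_right (dvd_pow hre two_ne_zero)).1 ?_)
    rw [hπ]
  have sq_dvd := dvd_add (pow_dvd_pow_of_dvd hre 2) (pow_dvd_pow_of_dvd him 2)
  rw [hπ] at sq_dvd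
  exact hpp.not_isUnit (isUnit_of_dvd_one ((mul_dvd_mul_iff_left hpp.ne_zero).1
    (by rwa [mul_one, ← sq])))

variable {p : ℕ} (m : ℕ)

theorem gaussianNormEq_prime_mul_eq_union {π : GaussianInt} (hp : p.Prime) (hπ : π.norm = p) :
    gaussianNormEq (p * m) =
      {z ∈ gaussianNormEq (p * m) | π ∣ z} ∪ {z ∈ gaussianNormEq (p * m) | star π ∣ z} := by
  rw [← Set.sep_or, eq_comm, Set.sep_eq_self_iff_mem_true]
  intro z hz
  refine dvd_or_star_dvd_of_dvd_norm (prime_of_norm_eq_prime hp hπ) ?_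
  rw [mem_gaussianNormEq.1 hz, Nat.cast_mul, ← hπ, Int.cast_mul, norm_eq_mul_conj, mul_assoc]
  exact dvd_mul_right _ _

theorem dvd_and_star_dvd_iff {π z : GaussianInt} (hp : p.Prime) (hp2 : p ≠ 2)
    (hπ : π.norm = p) : π ∣ z ∧ star π ∣ z ↔ (p : GaussianInt) ∣ z := by
  have hpπ : (p : GaussianInt) = π * star π := by
    rw [← norm_eq_mul_conj, hπ, Int.cast_natCast]
  rw [hpπ]
  refine ⟨?_, fun h => ⟨dvd_of_mul_right_dvd h, dvd_of_mul_left_dvd h⟩⟩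
  rintro ⟨⟨w, rfl⟩, h⟩
  have star_prime : Prime (star π) := prime_of_norm_eq_prime hp (by rw [norm_conj, hπ])
  exact mul_dvd_mul_left π ((star_prime.dvd_or_dvd h).resolve_left
    (star_not_dvd_of_norm_eq_prime hp hp2 hπ))

theorem ncard_gaussianNormEq_two_mul :
    (gaussianNormEq (2 * m)).ncard = (gaussianNormEq m).ncard := by
  have hπ : norm (⟨1, 1⟩ : GaussianInt) = (2 : ℕ) := by decide
  have star_dvd_iff (z : GaussianInt) : star ⟨1, 1⟩ ∣ z ↔ ⟨1, 1⟩ ∣ z :=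
    ⟨(Dvd.intro (⟨0, -1⟩ : GaussianInt) (by decide)).trans,
      (Dvd.intro (⟨0, 1⟩ : GaussianInt) (by decide)).trans⟩
  rw [gaussianNormEq_prime_mul_eq_union m Nat.prime_two hπ]
  simp only [star_dvd_iff, Set.union_self]
  exact ncard_gaussianNormEq_sep_dvd (by decide) hπ m

theorem ncard_gaussianNormEq_prime_mul_of_one (hp : p.Prime) (hp1 : p % 4 = 1) :
    (gaussianNormEq (p * m)).ncard + {z ∈ gaussianNormEq (p * m) | (p : GaussianInt) ∣ z}.ncard =
      2 * (gaussianNormEq m).ncard := by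
  have : Fact p.Prime := ⟨hp⟩
  obtain ⟨a, b, hab⟩ := Nat.Prime.sq_add_sq (p := p) (by omega)
  obtain ⟨π, hπ⟩ : ∃ π : GaussianInt, π.norm = p :=
    ⟨⟨a, b⟩, by rw [norm_eq_sq_add_sq, ← hab, Nat.cast_add, Nat.cast_pow, Nat.cast_pow]⟩
  have hπ' : (star π).norm = p := by rw [norm_conj, hπ]
  have fin := finite_gaussianNormEq (p * m)
  simp only [← dvd_and_star_dvd_iff hp (by omega) hπ, Set.sep_and]
  nth_rewrite 1 [gaussianNormEq_prime_mul_eq_union m hp hπ]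
  rw [Set.ncard_union_add_ncard_inter _ _ (fin.sep _) (fin.sep _),
    ncard_gaussianNormEq_sep_dvd (prime_of_norm_eq_prime hp hπ).ne_zero hπ,
    ncard_gaussianNormEq_sep_dvd (prime_of_norm_eq_prime hp hπ').ne_zero hπ', two_mul]

theorem sep_natCast_dvd_eq_of_three (hp : p.Prime) (hp3 : p % 4 = 3) :
    {z ∈ gaussianNormEq (p * m) | (p : GaussianInt) ∣ z} = gaussianNormEq (p * m) := by
  have : Fact p.Prime := ⟨hp⟩
  rw [Set.sep_eq_self_iff_mem_true]
  intro z hz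
  have dvd_norm : (p : GaussianInt) ∣ (z.norm : GaussianInt) := by
    rw [mem_gaussianNormEq.1 hz]
    exact_mod_cast Dvd.intro _ rfl
  simpa using dvd_or_star_dvd_of_dvd_norm
    (GaussianInt.prime_of_nat_prime_of_mod_four_eq_three p hp3) dvd_norm

theorem heckeRelation_ncard_gaussianNormEq :
    HeckeRelation (fun n => ZMod.χ₄ n) fun n => ((gaussianNormEq n).ncard : ℤ) := by
  intro p m hp _
  have divisible := ncard_gaussianNormEq_sep_natCast_dvd hp.ne_zero m
  obtain rfl | hodd := hp.eq_two_or_odd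
  · simp [ncard_gaussianNormEq_two_mul, show ZMod.χ₄ 2 = 0 by decide]
  obtain hp1 | hp3 : p % 4 = 1 ∨ p % 4 = 3 := by omega
  · have split := ncard_gaussianNormEq_prime_mul_of_one m hp hp1
    rw [divisible] at split
    simp only [ZMod.χ₄_nat_one_mod_four hp1, one_mul, one_add_one_eq_two]
    exact_mod_cast split
  · rw [sep_natCast_dvd_eq_of_three m hp hp3] at divisible
    simp only [ZMod.χ₄_nat_three_mod_four hp3, divisible]
    split_ifs <;> simp

end GaussianInt

section Indicator

/-- The indicator function of the multiples of `4`. -/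
def fourDvd (x : ℤ) : ℤ := if 4 ∣ x then 1 else 0

theorem fourDvd_natCast (d : ℕ) : fourDvd d = if 4 ∣ d then 1 else 0 := by
  simp only [fourDvd, ← Nat.cast_ofNat (R := ℤ) (n := 4), Int.natCast_dvd_natCast]

theorem fourDvd_neg (x : ℤ) : fourDvd (-x) = fourDvd x := by
  simp only [fourDvd, dvd_neg]

theorem fourDvd_eq_ite_cast (x : ℤ) : fourDvd x = if (x : ZMod 4) = 0 then 1 else 0 := by
  simp only [fourDvd, ZMod.intCast_zmod_eq_zero_iff_dvd x 4, Nat.cast_ofNat]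

theorem χ₄_mul_χ₄ (a b : ℤ) : ZMod.χ₄ a * ZMod.χ₄ b = fourDvd (a - b) - fourDvd (a + b) := by
  have mod_four : ∀ u v : ZMod 4, ZMod.χ₄ u * ZMod.χ₄ v =
      (if u - v = 0 then 1 else 0) - if u + v = 0 then 1 else 0 := by decide
  simpa only [fourDvd_eq_ite_cast, Int.cast_sub, Int.cast_add] using mod_four a b

theorem four_mul_sum_fourDvd {d : ℕ} (hd : 1 ≤ d) :
    4 * ∑ l ∈ Ico 1 d, fourDvd l = d - 2 - 2 * fourDvd d + ZMod.χ₄ d := by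
  induction d, hd using Nat.le_induction with
  | base => decide
  | succ d hd ih =>
    have mod_four : ∀ u : ZMod 4, 2 * (if u = 0 then 1 else 0) + ZMod.χ₄ u =
        1 - 2 * (if u + 1 = 0 then 1 else 0) + ZMod.χ₄ (u + 1) := by decide
    have step := mod_four d
    rw [sum_Ico_succ_top hd, mul_add, ih]
    simp only [fourDvd_eq_ite_cast, Int.cast_natCast, Nat.cast_add, Nat.cast_one, Int.cast_add,
      Int.cast_one]
    linear_combination step

theorem mul_sum_divisorsAntidiagonal_dvd_snd {k : ℕ} (hk : k ≠ 0) (n : ℕ) :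
    k * ∑ p ∈ n.divisorsAntidiagonal with k ∣ p.2, p.1 =
      ∑ p ∈ n.divisorsAntidiagonal with k ∣ p.1, p.1 := by
  rw [mul_sum]
  refine sum_nbij' (fun p => (k * p.1, p.2 / k)) (fun p => (p.1 / k, k * p.2)) ?_ ?_ ?_ ?_
    fun _ _ => rfl
  · rintro ⟨d, _⟩ hp
    obtain ⟨hp, e, rfl⟩ := mem_filter.1 hp
    simp_all [mul_left_comm, mul_assoc]
  · rintro ⟨_, e⟩ hp
    obtain ⟨hp, d, rfl⟩ := mem_filter.1 hp
    simp_all [mul_left_comm, mul_assoc]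
  · rintro ⟨d, _⟩ hp
    obtain ⟨hp, e, rfl⟩ := mem_filter.1 hp
    simp_all
  · rintro ⟨_, e⟩ hp
    obtain ⟨hp, d, rfl⟩ := mem_filter.1 hp
    simp_all

end Indicator

section Convolution

theorem sum_antidiagonal_mul_self_of_eq_mul {R : Type*} [CommSemiring R] {f g : ℕ → R} {c : R}
    (hf : f 0 = 1) (hg : g 0 = 0) (hfg : ∀ n, n ≠ 0 → f n = c * g n) {n : ℕ} (hn : n ≠ 0) :
    ∑ k ∈ antidiagonal n, f k.1 * f k.2 =
      c ^ 2 * ∑ k ∈ antidiagonal n, g k.1 * g k.2 + 2 * c * g n := by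
  have mk_eq : PowerSeries.mk f = 1 + PowerSeries.C c * PowerSeries.mk g := by
    ext m
    obtain rfl | hm := eq_or_ne m 0
    · simp [hf, hg]
    · simp [hfg m hm, hm, PowerSeries.coeff_one]
  have sq_eq : PowerSeries.mk f * PowerSeries.mk f = 1 +
      PowerSeries.C (c ^ 2) * (PowerSeries.mk g * PowerSeries.mk g) +
      PowerSeries.C (2 * c) * PowerSeries.mk g := by
    rw [mk_eq]
    simp only [map_pow, map_mul, map_ofNat]
    ring
  have coeff_eq := congrArg (PowerSeries.coeff n) sq_eq
  rw [map_add, map_add, PowerSeries.coeff_C_mul, PowerSeries.coeff_C_mul, PowerSeries.coeff_one,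
    if_neg hn, zero_add] at coeff_eq
  simpa only [PowerSeries.coeff_mul, PowerSeries.coeff_mk] using coeff_eq

theorem card_prod_add_eq {α β A : Type*} [AddMonoid A] [HasAntidiagonal A] (f : α → A) (g : β → A)
    (hf : ∀ k, (f ⁻¹' {k}).Finite) (hg : ∀ k, (g ⁻¹' {k}).Finite) (n : A) :
    Nat.card {p : α × β // f p.1 + g p.2 = n} =
      ∑ k ∈ antidiagonal n, (f ⁻¹' {k.1}).ncard * (g ⁻¹' {k.2}).ncard := by
  let e : {p : α × β // f p.1 + g p.2 = n} ≃
      Σ k : antidiagonal n, (f ⁻¹' {k.1.1}) × (g ⁻¹' {k.1.2}) :=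
    { toFun p := ⟨⟨(f p.1.1, g p.1.2), mem_antidiagonal.2 p.2⟩, ⟨p.1.1, rfl⟩, ⟨p.1.2, rfl⟩⟩
      invFun s := ⟨(s.2.1, s.2.2), by
        have ha : f s.2.1 = s.1.1.1 := s.2.1.2
        have hb : g s.2.2 = s.1.1.2 := s.2.2.2
        exact (congrArg₂ _ ha hb).trans (mem_antidiagonal.1 s.1.2)⟩
      left_inv _ := rfl
      right_inv := by
        rintro ⟨⟨⟨k, l⟩, -⟩, ⟨a, ha⟩, ⟨b, hb⟩⟩
        obtain rfl : f a = k := ha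
        obtain rfl : g b = l := hb
        rfl }
  have (k : A) : Finite (f ⁻¹' {k}) := hf k
  have (k : A) : Finite (g ⁻¹' {k}) := hg k
  rw [Nat.card_congr e, Nat.card_sigma]
  simp only [Nat.card_prod, Nat.card_coe_set_eq]
  exact sum_coe_sort (antidiagonal n) fun k => (f ⁻¹' {k.1}).ncard * (g ⁻¹' {k.2}).ncard

end Convolution

section Jacobi

/-- The function `δ n = ∑_{d ∣ n} χ₄ d`, which is a quarter of `r₂ n` for `n ≠ 0`.
As `Nat.divisors 0 = ∅`, it takes the value `0` at `0`. -/
def chiDivisorSum (n : ℕ) : ℤ := ∑ d ∈ n.divisors, ZMod.χ₄ d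

theorem ncard_gaussianNormEq {n : ℕ} (hn : n ≠ 0) :
    ((gaussianNormEq n).ncard : ℤ) = 4 * chiDivisorSum n := by
  have hχ : HeckeRelation (fun n => ZMod.χ₄ n) chiDivisorSum :=
    heckeRelation_sum_divisors fun a b => by rw [Nat.cast_mul, map_mul]
  have h := heckeRelation_ncard_gaussianNormEq.mul_apply_one hχ hn
  simpa [chiDivisorSum, ncard_gaussianNormEq_one] using h

theorem sum_antidiagonal_ncard_gaussianNormEq_mul {n : ℕ} (hn : n ≠ 0) :
    ∑ k ∈ antidiagonal n, ((gaussianNormEq k.1).ncard : ℤ) * (gaussianNormEq k.2).ncard =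
      4 ^ 2 * ∑ k ∈ antidiagonal n, chiDivisorSum k.1 * chiDivisorSum k.2 +
        2 * 4 * chiDivisorSum n :=
  sum_antidiagonal_mul_self_of_eq_mul (f := fun k => ((gaussianNormEq k).ncard : ℤ))
    (by simp [ncard_gaussianNormEq_zero]) (by simp [chiDivisorSum])
    (fun _ => ncard_gaussianNormEq) hn

/-- The coordinates of `v` paired up as the Gaussian integers `v 0 + v 1 i` and `v 2 + v 3 i`. -/
def gaussianPairEquiv : (Fin 4 → ℤ) ≃ GaussianInt × GaussianInt where
  toFun v := (⟨v 0, v 1⟩, ⟨v 2, v 3⟩)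
  invFun z := ![z.1.re, z.1.im, z.2.re, z.2.im]
  left_inv v := by ext i; fin_cases i <;> rfl
  right_inv _ := rfl

theorem norm_add_norm_gaussianPairEquiv (v : Fin 4 → ℤ) :
    (gaussianPairEquiv v).1.norm + (gaussianPairEquiv v).2.norm = ∑ i, v i ^ 2 := by
  rw [norm_eq_sq_add_sq, norm_eq_sq_add_sq, Fin.sum_univ_four, ← add_assoc]
  rfl

theorem preimage_natAbs_norm (k : ℕ) :
    (fun z : GaussianInt => z.norm.natAbs) ⁻¹' {k} = gaussianNormEq k := by
  ext z
  have := GaussianInt.norm_nonneg z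
  simp only [Set.mem_preimage, Set.mem_singleton_iff, mem_gaussianNormEq]
  omega

theorem card_sum_four_sq (n : ℕ) : Nat.card {v : Fin 4 → ℤ // ∑ i, v i ^ 2 = (n : ℤ)} =
    ∑ k ∈ antidiagonal n, (gaussianNormEq k.1).ncard * (gaussianNormEq k.2).ncard := by
  let normNat (z : GaussianInt) : ℕ := z.norm.natAbs
  have finite_fibre (k : ℕ) : (normNat ⁻¹' {k}).Finite := by
    rw [preimage_natAbs_norm]
    exact finite_gaussianNormEq k
  have sum_sq_iff (v : Fin 4 → ℤ) : ∑ i, v i ^ 2 = (n : ℤ) ↔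
      normNat (gaussianPairEquiv v).1 + normNat (gaussianPairEquiv v).2 = n := by
    have := GaussianInt.norm_nonneg (gaussianPairEquiv v).1
    have := GaussianInt.norm_nonneg (gaussianPairEquiv v).2
    simp only [← norm_add_norm_gaussianPairEquiv, normNat]
    omega
  rw [Nat.card_congr (gaussianPairEquiv.subtypeEquiv
      (q := fun z => normNat z.1 + normNat z.2 = n) sum_sq_iff),
    card_prod_add_eq _ _ finite_fibre finite_fibre]
  simp only [normNat, preimage_natAbs_norm]

theorem sum_antidiagonal_chiDivisorSum_mul (n : ℕ) :
    ∑ k ∈ antidiagonal n, chiDivisorSum k.1 * chiDivisorSum k.2 =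
      ∑ p ∈ n.divisorsAntidiagonal, ((p.1 - 1) * (1 + 2 * fourDvd p.2 - fourDvd p.1) -
        2 * ∑ l ∈ Ico 1 p.1, fourDvd l) := by
  have liouville := liouville_identity n fourDvd_neg
  simp only [← χ₄_mul_χ₄, Int.cast_natCast] at liouville
  simp only [chiDivisorSum, sum_antidiagonal_sum_divisors_mul]
  rw [liouville]
  refine sum_congr rfl fun p hp => ?_
  have one_le : 1 ≤ p.1 := Nat.pos_of_ne_zero (Nat.ne_zero_of_mem_divisorsAntidiagonal hp).1
  simp [fourDvd, one_le]

theorem four_mul_sum_mul_fourDvd_snd (n : ℕ) :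
    4 * ∑ p ∈ n.divisorsAntidiagonal, p.1 * fourDvd p.2 =
      ∑ p ∈ n.divisorsAntidiagonal, p.1 * fourDvd p.1 := by
  simp only [fourDvd_natCast, mul_ite, mul_one, mul_zero, ← sum_filter]
  exact_mod_cast mul_sum_divisorsAntidiagonal_dvd_snd four_ne_zero n

theorem two_mul_sum_antidiagonal_chiDivisorSum_mul_add (n : ℕ) :
    2 * ∑ k ∈ antidiagonal n, chiDivisorSum k.1 * chiDivisorSum k.2 + chiDivisorSum n =
      ∑ d ∈ n.divisors with ¬ 4 ∣ d, (d : ℤ) := by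
  have evaluate (p : ℕ × ℕ) (hp : p ∈ n.divisorsAntidiagonal) :
      2 * ((p.1 - 1) * (1 + 2 * fourDvd p.2 - fourDvd p.1) -
        2 * ∑ l ∈ Ico 1 p.1, fourDvd l) + ZMod.χ₄ p.1 = p.1 - 2 * (p.1 * fourDvd p.1) +
        4 * (p.1 * fourDvd p.2) + 4 * (fourDvd p.1 - fourDvd p.2) := by
    have one_le : 1 ≤ p.1 := Nat.pos_of_ne_zero (Nat.ne_zero_of_mem_divisorsAntidiagonal hp).1
    linear_combination -four_mul_sum_fourDvd one_le
  have symmetry : ∑ p ∈ n.divisorsAntidiagonal, fourDvd p.1 =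
      ∑ p ∈ n.divisorsAntidiagonal, fourDvd p.2 := by
    rw [Nat.sum_divisorsAntidiagonal fun d _ => fourDvd d,
      Nat.sum_divisorsAntidiagonal' fun _ d => fourDvd d]
  calc
    _ = ∑ p ∈ n.divisorsAntidiagonal, (p.1 - 2 * (p.1 * fourDvd p.1) +
          4 * (p.1 * fourDvd p.2) + 4 * (fourDvd p.1 - fourDvd p.2)) := by
      rw [sum_antidiagonal_chiDivisorSum_mul, chiDivisorSum,
        ← Nat.sum_divisorsAntidiagonal fun d _ => ZMod.χ₄ d, mul_sum, ← sum_add_distrib]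
      exact sum_congr rfl evaluate
    _ = ∑ p ∈ n.divisorsAntidiagonal, (p.1 - p.1 * fourDvd p.1) := by
      simp only [sum_add_distrib, sum_sub_distrib, ← mul_sum]
      rw [four_mul_sum_mul_fourDvd_snd, symmetry]
      ring
    _ = ∑ d ∈ n.divisors, (d - d * fourDvd d) :=
      Nat.sum_divisorsAntidiagonal fun d _ => (d - d * fourDvd d : ℤ)
    _ = ∑ d ∈ n.divisors with ¬ 4 ∣ d, (d : ℤ) := by
      rw [sum_filter]
      refine sum_congr rfl fun d _ => ?_
      by_cases h : 4 ∣ d <;> simp [fourDvd_natCast, h]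

end Jacobi

end FourSquares

/-- Jacobi's four-square theorem: for every positive integer `n`, the number of ordered
representations of `n` as a sum of four integer squares equals `8` times the sum of the
divisors `d` of `n` with `4 ∤ d`. -/
theorem jacobi_four_squares (n : ℕ) (hn : 0 < n) :
    Nat.card {v : Fin 4 → ℤ // ∑ i, (v i) ^ 2 = (n : ℤ)} =
      8 * ∑ d ∈ n.divisors.filter (fun d => ¬ (4 ∣ d)), d := by
  apply Nat.cast_injective (R := ℤ)
  rw [FourSquares.card_sum_four_sq]
  push_cast
  linear_combination FourSquares.sum_antidiagonal_ncard_gaussianNormEq_mul hn.ne' +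
    8 * FourSquares.two_mul_sum_antidiagonal_chiDivisorSum_mul_add n
end

section
/- For every positive integer n, r_6(n) = 16 · Σ_{d | n} χ(d) · (n/d)² − 4 · Σ_{d | n} χ(d) · d², where χ is the nonprincipal Dirichlet character modulo 4. -/
/-!
Write `θ = ∑ q ^ (u ^ 2)`, summed over `u ∈ ℤ`. The power series `f = θ ^ 6` solves
`θ · q f' = 6 f · q θ'`, and comparing coefficients gives a recurrence which, together with the
constant term, determines `f`. That the divisor sums satisfy the same recurrence amounts to
evaluating a sum over the triples `(u, d, e)` with `u ^ 2 + d e = n` and `d, e > 0`. Sign-reversing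
involutions in the style of Liouville cancel all terms except those with `d + 2 u = e`. For such a
triple `n = (u + d) ^ 2`, so the sum vanishes unless `n` is a square, and then it is elementary.
-/

namespace SixSquares

open Finset

section SignedSums

variable {ι M : Type*}

lemma sum_eq_zero_of_sign_reversing [AddCommGroup M] [IsAddTorsionFree M] {s : Finset ι}
    {f : ι → M} (σ : ι → ι) (hmem : ∀ t ∈ s, σ t ∈ s) (hinv : ∀ t ∈ s, σ (σ t) = t)
    (hneg : ∀ t ∈ s, f (σ t) = -f t) :
    ∑ t ∈ s, f t = 0 := by
  refine sum_involution (fun t _ ↦ σ t) (fun t ht ↦ ?_) (fun t ht hft hfix ↦ hft ?_) hmem hinv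
  · rw [hneg t ht, add_neg_cancel]
  · rw [← self_eq_neg, ← hneg t ht, hfix]

lemma sum_eq_sum_lt_add_sum_eq_add_sum_gt [AddCommMonoid M] {α : Type*} [LinearOrder α]
    (s : Finset ι) (p q : ι → α) (f : ι → M) :
    ∑ t ∈ s, f t = ∑ t ∈ s with p t < q t, f t + ∑ t ∈ s with p t = q t, f t
      + ∑ t ∈ s with q t < p t, f t := by
  simp only [sum_filter, ← sum_add_distrib]
  refine sum_congr rfl fun t _ ↦ ?_
  rcases lt_trichotomy (p t) (q t) with h | h | h
  · simp [h, h.ne, h.not_gt]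
  · simp [h]
  · simp [h, h.ne', h.not_gt]

end SignedSums

section ThetaRecurrence

variable {M : Type*} [AddCommGroup M] {s : ℤ} {a b : ℤ → M}

/-- The coefficients of a power series `f = ∑ a m q ^ m` satisfy this recurrence if and only if
`θ · q f' = s f · q θ'` where `θ = ∑ q ^ (u ^ 2)`; it characterizes `θ ^ s` up to a constant. -/
def ThetaRecurrence (s : ℤ) (a : ℤ → M) : Prop :=
  ∀ n > 0, ∑ u ∈ Icc (-n) n, (n - (s + 1) * u ^ 2) • a (n - u ^ 2) = 0

lemma ThetaRecurrence.smul_eq_neg_sum (ha : ThetaRecurrence s a) {n : ℤ} (hn : 0 < n) :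
    n • a n = -∑ u ∈ (Icc (-n) n).erase 0, (n - (s + 1) * u ^ 2) • a (n - u ^ 2) := by
  have h0 : (0 : ℤ) ∈ Icc (-n) n := by simp [hn.le]
  have h := ha n hn
  rw [← add_sum_erase _ _ h0] at h
  simpa using eq_neg_of_add_eq_zero_left h

theorem ThetaRecurrence.eq_of_eqOn_nonpos [IsAddTorsionFree M] (ha : ThetaRecurrence s a)
    (hb : ThetaRecurrence s b) (hab : ∀ m ≤ 0, a m = b m) (m : ℤ) : a m = b m := by
  induction hk : m.toNat using Nat.strong_induction_on generalizing m with
  | _ k ih =>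
    obtain hm | hm := le_or_gt m 0
    · exact hab m hm
    rw [← zsmul_right_inj hm.ne', ha.smul_eq_neg_sum hm, hb.smul_eq_neg_sum hm]
    congr 1
    refine sum_congr rfl fun u hu ↦ ?_
    have hu_sq : 0 < u ^ 2 := by
      have := ne_of_mem_erase hu
      positivity
    rw [ih (m - u ^ 2).toNat (by omega) _ rfl]

end ThetaRecurrence

section SquareRepresentations

variable {s : ℕ} {n : ℤ}

/-- The representations of `n` as an ordered sum of `s` squares of integers. Restricting the
entries to `[-n, n]` excludes nothing, since `|x| ≤ x ^ 2` for every integer `x`. -/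
noncomputable def sqReps (s : ℕ) (n : ℤ) : Finset (Fin s → ℤ) :=
  {v ∈ Fintype.piFinset fun _ ↦ Icc (-n) n | ∑ i, v i ^ 2 = n}

lemma mem_Icc_of_sq_le {x : ℤ} (h : x ^ 2 ≤ n) : x ∈ Icc (-n) n := by
  rw [mem_Icc]
  constructor <;> nlinarith

lemma mem_sqReps {v : Fin s → ℤ} : v ∈ sqReps s n ↔ ∑ i, v i ^ 2 = n := by
  simp only [sqReps, mem_filter, Fintype.mem_piFinset, and_iff_right_iff_imp]
  rintro rfl i
  exact mem_Icc_of_sq_le (single_le_sum (fun j _ ↦ sq_nonneg (v j)) (mem_univ i))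

lemma sqReps_eq_empty (hn : n < 0) : sqReps s n = ∅ := by
  refine eq_empty_of_forall_notMem fun v hv ↦ ?_
  have hsum : 0 ≤ ∑ i, v i ^ 2 := sum_nonneg fun i _ ↦ sq_nonneg _
  rw [mem_sqReps.mp hv] at hsum
  exact hn.not_ge hsum

lemma sqReps_zero : sqReps s 0 = {0} := by
  ext v
  simp [mem_sqReps, sum_eq_zero_iff_of_nonneg fun i _ ↦ sq_nonneg (v i), funext_iff]

lemma natCard_sum_sq_eq : Nat.card {v : Fin s → ℤ // ∑ i, v i ^ 2 = n} = #(sqReps s n) :=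
  Nat.subtype_card _ fun _ ↦ mem_sqReps

lemma sum_sqReps_succ {M : Type*} [AddCommMonoid M] (q : ℤ → M) :
    ∑ v ∈ sqReps (s + 1) n, q (v 0) = ∑ u ∈ Icc (-n) n, #(sqReps s (n - u ^ 2)) • q u := by
  simp only [← sum_const, sum_sigma']
  refine sum_nbij' (fun v ↦ ⟨v 0, Fin.tail v⟩) (fun p ↦ Fin.cons p.1 p.2) ?_ ?_ (by simp) (by simp)
    (by simp)
  · intro v hv
    rw [mem_sqReps, Fin.sum_univ_succ] at hv
    have htail : 0 ≤ ∑ i : Fin s, v i.succ ^ 2 := sum_nonneg fun i _ ↦ sq_nonneg _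
    rw [mem_sigma, mem_sqReps]
    exact ⟨mem_Icc_of_sq_le (by linarith), eq_sub_of_add_eq' hv⟩
  · rintro ⟨u, v⟩ huv
    rw [mem_sigma, mem_sqReps] at huv
    simp [mem_sqReps, Fin.sum_univ_succ, huv.2]

lemma sum_sqReps_apply_sq (i j : Fin s) :
    ∑ v ∈ sqReps s n, v i ^ 2 = ∑ v ∈ sqReps s n, v j ^ 2 := by
  have hmem : ∀ v ∈ sqReps s n, v ∘ Equiv.swap i j ∈ sqReps s n := fun v hv ↦ by
    rw [mem_sqReps] at hv ⊢
    exact (Equiv.sum_comp (Equiv.swap i j) fun k ↦ v k ^ 2).trans hv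
  refine sum_nbij' (· ∘ Equiv.swap i j) (· ∘ Equiv.swap i j) hmem hmem ?_ ?_ ?_ <;>
    simp [Function.comp_assoc, ← Equiv.coe_trans]

lemma mul_card_sqReps (i : Fin s) :
    n * #(sqReps s n) = s * ∑ v ∈ sqReps s n, v i ^ 2 := by
  calc n * #(sqReps s n) = ∑ v ∈ sqReps s n, ∑ j, v j ^ 2 := by
        rw [sum_congr rfl fun v hv ↦ mem_sqReps.mp hv, sum_const, nsmul_eq_mul, mul_comm]
    _ = ∑ j : Fin s, ∑ v ∈ sqReps s n, v i ^ 2 := by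
        rw [sum_comm]
        exact sum_congr rfl fun j _ ↦ sum_sqReps_apply_sq j i
    _ = s * ∑ v ∈ sqReps s n, v i ^ 2 := by simp

theorem thetaRecurrence_card_sqReps (s : ℕ) : ThetaRecurrence s fun n ↦ (#(sqReps s n) : ℤ) := by
  intro n _
  calc ∑ u ∈ Icc (-n) n, (n - (s + 1) * u ^ 2) • (#(sqReps s (n - u ^ 2)) : ℤ)
      = ∑ v ∈ sqReps (s + 1) n, (n - (s + 1) * v 0 ^ 2) := by
        rw [sum_sqReps_succ fun x ↦ n - (s + 1) * x ^ 2]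
        simp only [nsmul_eq_mul, smul_eq_mul, mul_comm]
    _ = n * #(sqReps (s + 1) n) - (s + 1) * ∑ v ∈ sqReps (s + 1) n, v 0 ^ 2 := by
        rw [sum_sub_distrib, sum_const, nsmul_eq_mul, mul_comm, mul_sum]
    _ = 0 := by rw [mul_card_sqReps 0]; push_cast; ring

end SquareRepresentations

section Triples

variable {M : Type*} [AddCommMonoid M] {n u d e : ℤ}

/-- The pairs `(d, e)` of positive integers with `d e = m`; there are none for `m ≤ 0`. -/
def factorPairs (m : ℤ) : Finset (ℤ × ℤ) :=
  m.toNat.divisorsAntidiagonal.map (Nat.castEmbedding.prodMap Nat.castEmbedding)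

lemma mem_factorPairs {m : ℤ} : (d, e) ∈ factorPairs m ↔ 0 < d ∧ 0 < e ∧ d * e = m := by
  simp only [factorPairs, mem_map, Nat.mem_divisorsAntidiagonal, Prod.exists,
    Function.Embedding.coe_prodMap, Prod.map_apply, Nat.castEmbedding_apply, Prod.mk.injEq]
  constructor
  · rintro ⟨a, b, ⟨hab, hm⟩, rfl, rfl⟩
    have hab_pos : 0 < a * b := by omega
    refine ⟨mod_cast Nat.pos_of_mul_pos_right hab_pos, mod_cast Nat.pos_of_mul_pos_left hab_pos, ?_⟩
    zify at hab
    omega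
  · rintro ⟨hd, he, rfl⟩
    lift d to ℕ using hd.le
    lift e to ℕ using he.le
    have hde : 0 < d * e := Nat.mul_pos (mod_cast hd) (mod_cast he)
    exact ⟨d, e, ⟨by norm_cast, by norm_cast; exact hde.ne'⟩, rfl, rfl⟩

lemma factorPairs_eq_empty {m : ℤ} (hm : m ≤ 0) : factorPairs m = ∅ := by
  simp [factorPairs, Int.toNat_of_nonpos hm]

/-- The triples `(u, d, e)` of integers with `u ^ 2 + d e = n` and `d, e > 0`. As a sigma type, sums
over it are iterated sums over `u` and `(d, e)`. -/
noncomputable def triples (n : ℤ) : Finset (Σ _ : ℤ, ℤ × ℤ) :=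
  (Icc (-n) n).sigma fun u ↦ factorPairs (n - u ^ 2)

lemma mem_triples : ⟨u, d, e⟩ ∈ triples n ↔ 0 < d ∧ 0 < e ∧ u ^ 2 + d * e = n := by
  simp only [triples, mem_sigma, mem_factorPairs]
  constructor
  · rintro ⟨-, hd, he, h⟩
    exact ⟨hd, he, by linarith⟩
  · rintro ⟨hd, he, h⟩
    exact ⟨mem_Icc_of_sq_le (by nlinarith), hd, he, by linarith⟩

lemma sum_triples_neg (f : ℤ → ℤ → ℤ → M) :
    ∑ ⟨u, d, e⟩ ∈ triples n, f (-u) d e = ∑ ⟨u, d, e⟩ ∈ triples n, f u d e := by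
  refine sum_nbij' (fun t ↦ ⟨-t.1, t.2⟩) (fun t ↦ ⟨-t.1, t.2⟩) ?_ ?_ ?_ ?_ ?_ <;>
    rintro ⟨u, d, e⟩ <;> simp [mem_triples]

lemma sum_diagonal_triples_of_not_isSquare (f : ℤ → ℤ → ℤ → M) (hn : ¬IsSquare n) :
    ∑ ⟨u, d, e⟩ ∈ triples n with d + 2 * u = e, f u d e = 0 := by
  rw [filter_false_of_mem, sum_empty]
  rintro ⟨u, d, e⟩ ht rfl
  obtain ⟨-, -, h⟩ := mem_triples.mp ht
  exact hn ⟨u + d, by linarith⟩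

lemma eq_and_bounds_of_mem_diagonal_triples_sq {l : ℕ} (h : ⟨u, d, d + 2 * u⟩ ∈ triples (l ^ 2)) :
    u = l - d ∧ 0 < d ∧ d < 2 * l := by
  obtain ⟨hd, he, h⟩ := mem_triples.mp h
  have hsq : (u + d) ^ 2 = l ^ 2 := by linarith
  rw [sq_eq_sq₀ (by omega) (by omega)] at hsq
  omega

lemma sum_diagonal_triples_sq (f : ℤ → ℤ → ℤ → M) (l : ℕ) :
    ∑ ⟨u, d, e⟩ ∈ triples (l ^ 2) with d + 2 * u = e, f u d e
      = ∑ d ∈ Ioo 0 (2 * l), f (l - d) d (2 * l - d) := by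
  refine (sum_nbij' (fun d : ℕ ↦ ⟨(l - d : ℤ), (d : ℤ), (2 * l - d : ℤ)⟩)
    (fun t ↦ t.2.1.toNat) ?_ ?_ ?_ ?_ ?_).symm
  · intro d hd
    rw [mem_Ioo] at hd
    rw [mem_filter, mem_triples]
    exact ⟨⟨by omega, by omega, by ring⟩, by ring⟩
  · rintro ⟨u, d, e⟩ ht
    obtain ⟨ht, rfl⟩ := mem_filter.mp ht
    obtain ⟨rfl, hd⟩ := eq_and_bounds_of_mem_diagonal_triples_sq ht
    simp only [mem_Ioo]
    omega
  · simp
  · rintro ⟨u, d, e⟩ ht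
    obtain ⟨ht, rfl⟩ := mem_filter.mp ht
    obtain ⟨rfl, hd⟩ := eq_and_bounds_of_mem_diagonal_triples_sq ht
    simp only [Int.toNat_of_nonneg hd.1.le]
    ring_nf
  · simp

lemma sum_lt_eq_sum_sheared (G : ℤ → ℤ → ℤ → M) :
    ∑ ⟨u, d, e⟩ ∈ triples n with d + 2 * u < e, G e (e - 2 * u) (u + d)
      = ∑ ⟨u, d, e⟩ ∈ triples n with d < e + 2 * u, G (e + 2 * u - d) (d + e) u := by
  refine sum_nbij' (fun ⟨u, d, e⟩ ↦ ⟨u + d, d, e - 2 * u - d⟩)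
    (fun ⟨u, d, e⟩ ↦ ⟨u - d, d, e + 2 * u - d⟩) ?_ ?_ ?_ ?_ ?_
  · rintro ⟨u, d, e⟩ ht
    simp only [mem_filter, mem_triples] at ht ⊢
    obtain ⟨⟨hd, he, h⟩, hlt⟩ := ht
    exact ⟨⟨hd, by omega, by linarith⟩, by omega⟩
  · rintro ⟨u, d, e⟩ ht
    simp only [mem_filter, mem_triples] at ht ⊢
    obtain ⟨⟨hd, he, h⟩, hlt⟩ := ht
    exact ⟨⟨hd, by omega, by linarith⟩, by omega⟩
  all_goals
    rintro ⟨u, d, e⟩ -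
    ring_nf

end Triples

section LiouvilleIdentity

variable {M : Type*} [AddCommGroup M] {G : ℤ → ℤ → ℤ → M} {n : ℤ}

/-- The symmetries of a weight `G` under which the sum of `G e (e - 2 u) (u + d)` over the triples
`u ^ 2 + d e = n` with `d, e > 0` reduces to the triples with `d + 2 u = e`. -/
structure IsLiouvilleWeight (G : ℤ → ℤ → ℤ → M) : Prop where
  periodic : ∀ a x y, G (a + 4 * y) x y = G a x y
  neg_left : ∀ a x y, G (-a) x y = -G a x y
  neg_middle : ∀ a x y, G a (-x) y = -G a x y
  neg_right : ∀ a x y, G a x (-y) = -G a x y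

variable [IsAddTorsionFree M]

lemma IsLiouvilleWeight.zero_left (hG : IsLiouvilleWeight G) (x y : ℤ) : G 0 x y = 0 := by
  rw [← self_eq_neg, ← hG.neg_left, neg_zero]

lemma IsLiouvilleWeight.sum_gt_eq_zero (hG : IsLiouvilleWeight G) :
    ∑ ⟨u, d, e⟩ ∈ triples n with e < d + 2 * u, G e (e - 2 * u) (u + d) = 0 := by
  refine sum_eq_zero_of_sign_reversing
    (fun ⟨u, d, e⟩ ↦ ⟨e - u, d + 2 * u - e, e⟩) ?_ ?_ ?_
  · rintro ⟨u, d, e⟩ ht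
    simp only [mem_filter, mem_triples] at ht ⊢
    obtain ⟨⟨hd, he, h⟩, hlt⟩ := ht
    exact ⟨⟨by omega, he, by linarith⟩, by omega⟩
  · rintro ⟨u, d, e⟩ -
    ring_nf
  · rintro ⟨u, d, e⟩ -
    rw [← hG.neg_middle]
    ring_nf

lemma IsLiouvilleWeight.sum_sheared_eq_zero (hG : IsLiouvilleWeight G) :
    ∑ ⟨u, d, e⟩ ∈ triples n with d < e + 2 * u, G (e + 2 * u - d) (d + e) u = 0 := by
  rw [sum_eq_sum_lt_add_sum_eq_add_sum_gt _ (fun ⟨u, d, e⟩ ↦ d + 2 * u) (fun ⟨_, _, e⟩ ↦ e)]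
  simp only [filter_filter]
  have hlt : ∑ ⟨u, d, e⟩ ∈ triples n with d < e + 2 * u ∧ d + 2 * u < e,
      G (e + 2 * u - d) (d + e) u = 0 := by
    refine sum_eq_zero_of_sign_reversing (fun ⟨u, d, e⟩ ↦ ⟨-u, d, e⟩) ?_ ?_ ?_
    · rintro ⟨u, d, e⟩ ht
      simp only [mem_filter, mem_triples, neg_sq] at ht ⊢
      exact ⟨ht.1, by omega⟩
    · simp
    · rintro ⟨u, d, e⟩ -
      simp only [hG.neg_right]
      rw [← hG.periodic _ _ u]
      ring_nf
  have heq : ∑ ⟨u, d, e⟩ ∈ triples n with d < e + 2 * u ∧ d + 2 * u = e,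
      G (e + 2 * u - d) (d + e) u = 0 := by
    refine sum_eq_zero ?_
    rintro ⟨u, d, e⟩ ht
    obtain ⟨-, -, rfl⟩ := mem_filter.mp ht
    rw [← hG.zero_left (d + (d + 2 * u)) u, ← hG.periodic 0]
    ring_nf
  have hgt : ∑ ⟨u, d, e⟩ ∈ triples n with d < e + 2 * u ∧ e < d + 2 * u,
      G (e + 2 * u - d) (d + e) u = 0 := by
    refine sum_eq_zero_of_sign_reversing (fun ⟨u, d, e⟩ ↦ ⟨u, e, d⟩) ?_ ?_ ?_
    · rintro ⟨u, d, e⟩ ht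
      simp only [mem_filter, mem_triples] at ht ⊢
      exact ⟨⟨ht.1.2.1, ht.1.1, by linarith [ht.1.2.2]⟩, ht.2.symm⟩
    · simp
    · rintro ⟨u, d, e⟩ -
      rw [← hG.neg_left, ← hG.periodic (-(e + 2 * u - d))]
      ring_nf
  simpa only [hlt, heq, zero_add] using hgt

theorem IsLiouvilleWeight.sum_triples_eq_sum_diagonal (hG : IsLiouvilleWeight G) (n : ℤ) :
    ∑ ⟨u, d, e⟩ ∈ triples n, G e (e - 2 * u) (u + d)
      = ∑ ⟨u, d, e⟩ ∈ triples n with d + 2 * u = e, G e (e - 2 * u) (u + d) := by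
  rw [sum_eq_sum_lt_add_sum_eq_add_sum_gt _ (fun ⟨u, d, e⟩ ↦ d + 2 * u) (fun ⟨_, _, e⟩ ↦ e)]
  have hlt := (sum_lt_eq_sum_sheared G).trans (hG.sum_sheared_eq_zero (n := n))
  simpa only [hlt, zero_add, add_eq_left] using hG.sum_gt_eq_zero

end LiouvilleIdentity

section SixSquaresWeight

open ZMod

lemma χ₄_intCast_neg (a : ℤ) : χ₄ ((-a : ℤ) : ZMod 4) = -χ₄ a := by
  rw [χ₄_int_eq_if_mod_four, χ₄_int_eq_if_mod_four]
  split_ifs <;> omega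

lemma χ₄_intCast_add_four_mul (a k : ℤ) : χ₄ ((a + 4 * k : ℤ) : ZMod 4) = χ₄ a := by
  rw [χ₄_int_mod_four, Int.add_mul_emod_self_left, ← χ₄_int_mod_four]

lemma χ₄_two_mul (l : ℕ) : χ₄ ((2 * l : ℕ) : ZMod 4) = 0 := by
  rw [χ₄_nat_eq_if_mod_four, if_pos (by omega)]

lemma χ₄_two_mul_add_one (l : ℕ) : χ₄ ((2 * l + 1 : ℕ) : ZMod 4) = (-1) ^ l := by
  rw [χ₄_eq_neg_one_pow (by omega)]
  congr 1
  omega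

lemma χ₄_two_mul_sub (l d : ℕ) : χ₄ ((2 * l - d : ℤ) : ZMod 4) = (-1) ^ (l + 1) * χ₄ d := by
  rw [χ₄_int_eq_if_mod_four, χ₄_nat_eq_if_mod_four]
  obtain hl | hl := l.even_or_odd <;> rw [hl.add_one.neg_one_pow] <;> grind

lemma sum_χ₄_mul_self (l : ℕ) :
    ∑ d ∈ range (2 * l), χ₄ d * (d : ℤ) = (-1) ^ (l + 1) * l := by
  induction l with
  | zero => simp
  | succ l ih =>
    rw [Nat.mul_succ, sum_range_succ, sum_range_succ, ih, χ₄_two_mul, χ₄_two_mul_add_one]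
    push_cast
    ring

lemma sum_χ₄_mul_cube (l : ℕ) :
    ∑ d ∈ range (2 * l), χ₄ d * (d : ℤ) ^ 3 = (-1) ^ (l + 1) * (4 * l ^ 3 - 3 * l) := by
  induction l with
  | zero => simp
  | succ l ih =>
    rw [Nat.mul_succ, sum_range_succ, sum_range_succ, ih, χ₄_two_mul, χ₄_two_mul_add_one]
    push_cast
    ring

/-- The Liouville weight for six squares. The polynomial factor is chosen so that, at
`(x, y) = (e - 2 u, u + d)`, its even part in `u` is `(d e - 6 u ^ 2) (4 d ^ 2 - e ^ 2)`. -/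
def sixWeight (a x y : ℤ) : ℤ := χ₄ a * (4 * x * y ^ 3 - x ^ 3 * y)

lemma isLiouvilleWeight_sixWeight : IsLiouvilleWeight sixWeight where
  periodic a x y := by rw [sixWeight, χ₄_intCast_add_four_mul, sixWeight]
  neg_left a x y := by rw [sixWeight, χ₄_intCast_neg, neg_mul, sixWeight]
  neg_middle a x y := by simp only [sixWeight]; ring
  neg_right a x y := by simp only [sixWeight]; ring

lemma sum_sixWeight_Ioo {l : ℕ} (hl : 0 < l) :
    ∑ d ∈ Ioo 0 (2 * l), sixWeight (2 * l - d) d l = 3 * l ^ 2 := by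
  have hsign : ((-1 : ℤ) ^ (l + 1)) * (-1) ^ (l + 1) = 1 := by rw [← mul_pow]; simp
  have hrange : ∑ d ∈ Ioo 0 (2 * l), sixWeight (2 * l - d) d l
      = ∑ d ∈ range (2 * l), sixWeight (2 * l - d) d l := by
    rw [range_eq_Ico, ← Ioo_insert_left (by omega), sum_insert (by simp)]
    simp [sixWeight]
  calc ∑ d ∈ Ioo 0 (2 * l), sixWeight (2 * l - d) d l
      = (-1) ^ (l + 1) * (4 * l ^ 3 * ∑ d ∈ range (2 * l), χ₄ d * (d : ℤ)
          - l * ∑ d ∈ range (2 * l), χ₄ d * (d : ℤ) ^ 3) := by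
        rw [hrange, mul_sum, mul_sum, ← sum_sub_distrib, mul_sum]
        refine sum_congr rfl fun d _ ↦ ?_
        rw [sixWeight, χ₄_two_mul_sub]
        ring
    _ = 3 * l ^ 2 := by
        rw [sum_χ₄_mul_self, sum_χ₄_mul_cube]
        linear_combination 3 * (l : ℤ) ^ 2 * hsign

lemma sum_triples_sixWeight_sq {l : ℕ} (hl : 0 < l) :
    ∑ ⟨u, d, e⟩ ∈ triples (l ^ 2), sixWeight e (e - 2 * u) (u + d) = 3 * (l : ℤ) ^ 2 := by
  rw [isLiouvilleWeight_sixWeight.sum_triples_eq_sum_diagonal,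
    sum_diagonal_triples_sq fun u d e ↦ sixWeight e (e - 2 * u) (u + d), ← sum_sixWeight_Ioo hl]
  refine sum_congr rfl fun d _ ↦ ?_
  ring_nf

lemma sum_triples_sixWeight_of_not_isSquare {n : ℤ} (hn : ¬IsSquare n) :
    ∑ ⟨u, d, e⟩ ∈ triples n, sixWeight e (e - 2 * u) (u + d) = 0 := by
  rw [isLiouvilleWeight_sixWeight.sum_triples_eq_sum_diagonal,
    sum_diagonal_triples_of_not_isSquare (fun u d e ↦ sixWeight e (e - 2 * u) (u + d)) hn]

end SixSquaresWeight

section DivisorSums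

open ZMod

/-- The sum `∑ χ₄ e (4 d ^ 2 - e ^ 2)` over the factorizations `d e = m`; it is `0` for `m ≤ 0`. -/
def sixDivisorSum (m : ℤ) : ℤ :=
  ∑ ⟨d, e⟩ ∈ factorPairs m, χ₄ e * (4 * d ^ 2 - e ^ 2)

/-- The divisor-sum expression for the coefficient of `q ^ m` in `θ ^ 6`, valid for every integer
`m`: the first summand supplies the constant term. -/
def sixCoeff (m : ℤ) : ℤ := (if m = 0 then 1 else 0) + 4 * sixDivisorSum m

lemma sixDivisorSum_of_nonpos {m : ℤ} (hm : m ≤ 0) : sixDivisorSum m = 0 := by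
  rw [sixDivisorSum, factorPairs_eq_empty hm, sum_empty]

lemma sixDivisorSum_natCast (n : ℕ) :
    sixDivisorSum n = ∑ d ∈ n.divisors, χ₄ d * (4 * ((n / d : ℕ) : ℤ) ^ 2 - (d : ℤ) ^ 2) := by
  rw [← Nat.sum_divisorsAntidiagonal' fun a b ↦ χ₄ b * (4 * (a : ℤ) ^ 2 - (b : ℤ) ^ 2)]
  simp [sixDivisorSum, factorPairs]

lemma sum_mul_sixDivisorSum_eq_sum_triples (n : ℤ) :
    ∑ u ∈ Icc (-n) n, (n - 7 * u ^ 2) * sixDivisorSum (n - u ^ 2)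
      = ∑ ⟨u, d, e⟩ ∈ triples n, (d * e - 6 * u ^ 2) * (χ₄ e * (4 * d ^ 2 - e ^ 2)) := by
  rw [triples, sum_sigma]
  refine sum_congr rfl fun u _ ↦ ?_
  rw [sixDivisorSum, mul_sum]
  refine sum_congr rfl ?_
  rintro ⟨d, e⟩ h
  obtain ⟨-, -, h⟩ := mem_factorPairs.mp h
  simp only [h]
  ring

lemma sum_mul_sixDivisorSum_eq_sum_sixWeight (n : ℤ) :
    ∑ u ∈ Icc (-n) n, (n - 7 * u ^ 2) * sixDivisorSum (n - u ^ 2)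
      = ∑ ⟨u, d, e⟩ ∈ triples n, sixWeight e (e - 2 * u) (u + d) := by
  have heven : 2 * ∑ ⟨u, d, e⟩ ∈ triples n, (d * e - 6 * u ^ 2) * (χ₄ e * (4 * d ^ 2 - e ^ 2))
      = ∑ ⟨u, d, e⟩ ∈ triples n, sixWeight e (e - 2 * u) (u + d)
        + ∑ ⟨u, d, e⟩ ∈ triples n, sixWeight e (e - 2 * -u) (-u + d) := by
    rw [mul_sum, ← sum_add_distrib]
    refine sum_congr rfl ?_
    rintro ⟨u, d, e⟩ -
    simp only [sixWeight]
    ring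
  rw [sum_triples_neg fun u d e ↦ sixWeight e (e - 2 * u) (u + d)] at heven
  rw [sum_mul_sixDivisorSum_eq_sum_triples]
  linarith

lemma filter_sub_sq_eq_zero (l : ℕ) :
    {u ∈ Icc (-(l ^ 2 : ℤ)) (l ^ 2) | (l : ℤ) ^ 2 - u ^ 2 = 0} = {(l : ℤ), -(l : ℤ)} := by
  ext u
  rw [mem_filter, sub_eq_zero, eq_comm (a := (l : ℤ) ^ 2), sq_eq_sq_iff_eq_or_eq_neg, mem_insert,
    mem_singleton, and_iff_right_iff_imp, ← sq_eq_sq_iff_eq_or_eq_neg]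
  exact fun h ↦ mem_Icc_of_sq_le h.le

theorem thetaRecurrence_sixCoeff : ThetaRecurrence 6 sixCoeff := by
  intro n hn
  have hsplit : ∑ u ∈ Icc (-n) n, (n - (6 + 1) * u ^ 2) • sixCoeff (n - u ^ 2)
      = ∑ u ∈ Icc (-n) n with n - u ^ 2 = 0, (n - 7 * u ^ 2)
        + 4 * ∑ ⟨u, d, e⟩ ∈ triples n, sixWeight e (e - 2 * u) (u + d) := by
    rw [← sum_mul_sixDivisorSum_eq_sum_sixWeight, sum_filter, mul_sum, ← sum_add_distrib]
    refine sum_congr rfl fun u _ ↦ ?_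
    rw [sixCoeff, smul_eq_mul]
    split_ifs <;> ring
  rw [hsplit]
  by_cases hsq : IsSquare n
  · obtain ⟨l, rfl⟩ : ∃ l : ℕ, n = l ^ 2 := by
      obtain ⟨r, rfl⟩ := hsq
      exact ⟨r.natAbs, by rw [Int.natAbs_sq, sq]⟩
    have hl : 0 < l := Nat.pos_of_ne_zero (by rintro rfl; simp at hn)
    rw [filter_sub_sq_eq_zero, sum_pair (by omega), sum_triples_sixWeight_sq hl]
    ring
  · have hempty : {u ∈ Icc (-n) n | n - u ^ 2 = 0} = ∅ :=
      filter_false_of_mem fun u _ h ↦ hsq ⟨u, by linarith⟩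
    rw [hempty, sum_triples_sixWeight_of_not_isSquare hsq, sum_empty, mul_zero, add_zero]

theorem card_sqReps_six (m : ℤ) : #(sqReps 6 m) = sixCoeff m := by
  refine (thetaRecurrence_card_sqReps 6).eq_of_eqOn_nonpos thetaRecurrence_sixCoeff
    (fun m hm ↦ ?_) m
  rw [sixCoeff, sixDivisorSum_of_nonpos hm]
  obtain rfl | hm := hm.eq_or_lt
  · simp [sqReps_zero]
  · simp [sqReps_eq_empty hm, hm.ne]

end DivisorSums

end SixSquares

/-- The six-squares theorem: `r_6(n) = 16·Σ_{d|n} χ(d)(n/d)² − 4·Σ_{d|n} χ(d)d²`, where `χ` is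
the nonprincipal Dirichlet character mod 4. -/
theorem six_squares (χ : ℕ → ℤ)
    (hχ : ∀ n, χ n = if n % 4 = 1 then 1 else if n % 4 = 3 then -1 else 0)
    (n : ℕ) (hn : 0 < n) :
    (Nat.card {v : Fin 6 → ℤ // ∑ i, (v i) ^ 2 = (n : ℤ)} : ℤ) =
      16 * ∑ d ∈ n.divisors, χ d * ((n / d : ℕ) : ℤ) ^ 2
        - 4 * ∑ d ∈ n.divisors, χ d * (d : ℤ) ^ 2 := by
  have hχ₄ (d : ℕ) : ZMod.χ₄ d = χ d := by
    rw [hχ, ZMod.χ₄_nat_eq_if_mod_four]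
    split_ifs <;> omega
  have hn₀ : (n : ℤ) ≠ 0 := mod_cast hn.ne'
  rw [SixSquares.natCard_sum_sq_eq, SixSquares.card_sqReps_six, SixSquares.sixCoeff, if_neg hn₀,
    zero_add, SixSquares.sixDivisorSum_natCast, Finset.mul_sum, Finset.mul_sum, Finset.mul_sum,
    ← Finset.sum_sub_distrib]
  refine Finset.sum_congr rfl fun d _ ↦ ?_
  rw [hχ₄]
  ring
end
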